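/- arXiv:1408.5764 — 2 statements merged into one kernel-verified Lean document; each statement's English description precedes it below -/
import Mathlib

section
/- Let k be a perfect field of characteristic p > 2, let r ≥ 1 and m,n ≥ p^r, and let S := S(m|n,p^r), V := k^{m|n}, M₀, M₁ be as in the context. Let a,b ≥ 1 with a+b = p^r, and let T_{a,b} := V^{⊗p^r} / span{ z − z·σ : z ∈ V^{⊗p^r}, σ ∈ 𝔖_a × 𝔖_b }, the coinvariants of V^{⊗p^r} for the signed action of the Young subgroup 𝔖_a × 𝔖_b ⊆ 𝔖_{p^r} (so T_{a,b} ≅ 𝐒^a(V) ⊗ 𝐒^b(V)); T_{a,b} is an S-module. Then Ext^s_S(M_ℓ, T_{a,b}) = 0 for every s ≥ 0 and every ℓ ∈ {0,1}. -/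
open CategoryTheory Finset

set_option synthInstance.maxHeartbeats 1000000
set_option maxHeartbeats 4000000

namespace Stmt12

variable (k : Type) [Field k]

/-- index set for the standard homogeneous basis of the superspace `k^{m|n}` -/
abbrev BIdx (m n : ℕ) := Fin m ⊕ Fin n

/-- parity of a standard basis vector of `k^{m|n}` (`false` = even, `true` = odd) -/
def bpar {m n : ℕ} : BIdx m n → Bool := Sum.elim (fun _ => false) (fun _ => true)

/-- the `d`-th tensor power `(k^{m|n})^{⊗d}`, modelled on its standard monomial basis -/
def W (m n d : ℕ) : Type := (Fin d → BIdx m n) → k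

instance (m n d : ℕ) : AddCommGroup (W k m n d) :=
  inferInstanceAs (AddCommGroup ((Fin d → BIdx m n) → k))

instance (m n d : ℕ) : Module k (W k m n d) :=
  inferInstanceAs (Module k ((Fin d → BIdx m n) → k))

/-- the number of inversions of the permutation `σ` in which both entries involved are
odd, for a tensor whose `i`-th slot has parity `ε i`; the Koszul sign is `(-1)` to this count -/
def signExp {d : ℕ} (σ : Equiv.Perm (Fin d)) (ε : Fin d → Bool) : ℕ :=
  ((univ ×ˢ univ).filter fun q : Fin d × Fin d =>
    q.1 < q.2 ∧ σ q.2 < σ q.1 ∧ ε (σ q.1) = true ∧ ε (σ q.2) = true).card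

/-- the signed (right) permutation action of `σ ∈ 𝔖_d` on `(k^{m|n})^{⊗d}`:
on a basis tensor, the transposition `(i, i+1)` acts by exchanging the `i`-th and `(i+1)`-th
factors and multiplying by `(-1)` if both are odd -/
def act {m n d : ℕ} (σ : Equiv.Perm (Fin d)) : W k m n d →ₗ[k] W k m n d where
  toFun x := fun g => (-1 : k) ^ signExp σ (fun i => bpar (g (σ⁻¹ i))) * x (g ∘ ⇑σ⁻¹)
  map_add' x y := funext fun g => mul_add _ _ _
  map_smul' c x := funext fun g => mul_left_comm _ _ _

/-- the Schur superalgebra `S(m|n, d) = End_{k𝔖_d}((k^{m|n})^{⊗d})`, i.e. the algebra of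
`k`-linear endomorphisms of `(k^{m|n})^{⊗d}` commuting with the signed `𝔖_d`-action -/
def Schur (m n d : ℕ) : Subalgebra k (Module.End k (W k m n d)) :=
  Subalgebra.centralizer k (Set.range (act k (m := m) (n := n) (d := d)))

/-- the Schur superalgebra, as a type -/
def SAlg (m n d : ℕ) : Type := Schur k m n d

instance (m n d : ℕ) : Ring (SAlg k m n d) :=
  inferInstanceAs (Ring (Schur k m n d))

instance (m n d : ℕ) : Algebra k (SAlg k m n d) :=
  inferInstanceAs (Algebra k (Schur k m n d))

instance (m n d : ℕ) : Module (SAlg k m n d) (W k m n d) :=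
  Module.compHom _ (Subalgebra.val (Schur k m n d)).toRingHom

variable (m n d : ℕ)

/-- the pure tensor `v 0 ⊗ v 1 ⊗ ⋯ ⊗ v (d-1)` in `(k^{m|n})^{⊗d}` -/
def ptensor (v : Fin d → (BIdx m n → k)) : W k m n d := fun f => ∏ i, v i (f i)

/-- the pure tensor power `v^{⊗d}` -/
def tpow (v : BIdx m n → k) : W k m n d := ptensor k m n d (fun _ => v)

/-- a vector of `k^{m|n}` is even if it lies in `k^m = (k^{m|n})₀` -/
def IsEven {m n : ℕ} (v : BIdx m n → k) : Prop := ∀ j : Fin n, v (Sum.inr j) = 0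

/-- a vector of `k^{m|n}` is odd if it lies in `k^n = (k^{m|n})₁` -/
def IsOdd {m n : ℕ} (v : BIdx m n → k) : Prop := ∀ i : Fin m, v (Sum.inl i) = 0

/-- the relations `z - z·σ` defining the coinvariant space `𝐒^d(k^{m|n})` -/
def symRel : Submodule (SAlg k m n d) (W k m n d) :=
  Submodule.span _ {x | ∃ (z : W k m n d) (σ : Equiv.Perm (Fin d)), x = z - act k σ z}

/-- the coinvariant space `𝐒^d(k^{m|n})` -/
def SymQ : Type := W k m n d ⧸ symRel k m n d

instance : AddCommGroup (SymQ k m n d) :=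
  inferInstanceAs (AddCommGroup (W k m n d ⧸ symRel k m n d))

instance : Module (SAlg k m n d) (SymQ k m n d) :=
  inferInstanceAs (Module (SAlg k m n d) (W k m n d ⧸ symRel k m n d))

/-- the class of a tensor `z` in `𝐒^d(k^{m|n})`; for `z = v^{⊗d}` this is `v^d` -/
def symMk (z : W k m n d) : SymQ k m n d :=
  Submodule.Quotient.mk z

/-- `M₀`: the span of the `d`-th powers `v^d` of even vectors `v`, inside `𝐒^d(k^{m|n})`;
this is the evaluation at `k^{m|n}` of the Frobenius twist functor `I₀^{(r)}` when `d = p^r` -/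
def M0 : Submodule (SAlg k m n d) (SymQ k m n d) :=
  Submodule.span _ {x | ∃ v, IsEven k v ∧ x = symMk k m n d (tpow k m n d v)}

/-- `M₁`: the span of the tensor powers `y^{⊗d}` of odd vectors `y`, inside `(k^{m|n})^{⊗d}`;
this is the evaluation at `k^{m|n}` of the Frobenius twist functor `I₁^{(r)}` when `d = p^r` -/
def M1 : Submodule (SAlg k m n d) (W k m n d) :=
  Submodule.span _ {x | ∃ v, IsOdd k v ∧ x = tpow k m n d v}

/-- the category of left modules over the Schur superalgebra `S(m|n,d)` -/
abbrev SMod := ModuleCat.{0} (SAlg k m n d)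

/-- `M₀` as an object of the module category of `S(m|n,d)` -/
noncomputable abbrev M0cat : SMod k m n d := ModuleCat.of _ (M0 k m n d)

/-- `M₁` as an object of the module category of `S(m|n,d)` -/
noncomputable abbrev M1cat : SMod k m n d := ModuleCat.of _ (M1 k m n d)

noncomputable instance : HasDerivedCategory.{1} (ModuleCat.{0} (SAlg k m n d)) :=
  HasDerivedCategory.standard _

instance : HasExt.{1} (ModuleCat.{0} (SAlg k m n d)) :=
  CategoryTheory.hasExt_of_hasDerivedCategory _

open Abelian in
lemma Ext_mk₀_add {X Y : SMod k m n d} (f g : X ⟶ Y) :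
    Ext.mk₀ (f + g) = Ext.mk₀ f + Ext.mk₀ g := by
  apply Ext.ext
  rw [Ext.add_hom, Ext.mk₀_hom, Ext.mk₀_hom, Ext.mk₀_hom, Functor.map_add]
  simp [ShiftedHom.mk₀, Preadditive.add_comp]

open Abelian in
/-- the `k`-vector space structure on the Ext-groups for the Schur superalgebra, where
`c • x` is the Yoneda composite of `x` with `c • 𝟙` -/
noncomputable instance extModule (X Y : SMod k m n d) (N : ℕ) :
    Module k (Ext X Y N) where
  smul c x := (Ext.mk₀ (c • 𝟙 X)).comp x (zero_add N)
  one_smul x := by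
    show (Ext.mk₀ ((1 : k) • 𝟙 X)).comp x (zero_add N) = x
    rw [one_smul]
    exact Ext.mk₀_id_comp x
  mul_smul a b x := by
    show (Ext.mk₀ ((a * b) • 𝟙 X)).comp x (zero_add N) =
      (Ext.mk₀ (a • 𝟙 X)).comp ((Ext.mk₀ (b • 𝟙 X)).comp x (zero_add N)) (zero_add N)
    rw [Ext.mk₀_comp_mk₀_assoc (a • 𝟙 X) (b • 𝟙 X) x]
    congr 2
    simp [smul_smul, mul_comm a b]
  smul_zero a := Ext.comp_zero _ _ _ _ _
  smul_add a x y := Ext.comp_add _ _ _ _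
  add_smul a b x := by
    show (Ext.mk₀ ((a + b) • 𝟙 X)).comp x (zero_add N) =
      (Ext.mk₀ (a • 𝟙 X)).comp x (zero_add N) + (Ext.mk₀ (b • 𝟙 X)).comp x (zero_add N)
    rw [add_smul, Ext_mk₀_add, Ext.add_comp]
  zero_smul x := by
    show (Ext.mk₀ ((0 : k) • 𝟙 X)).comp x (zero_add N) = 0
    rw [zero_smul, Ext.mk₀_zero, Ext.zero_comp]

end Stmt12

namespace Stmt12

open CategoryTheory Abelian

variable (k : Type) [Field k] (m n d : ℕ)

/-- membership in the Young subgroup `𝔖_a × 𝔖_b` of `𝔖_d` (where `d = a + b`):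
a permutation lies in it iff it preserves the first block `{0, …, a-1}` -/
def InYoung (a : ℕ) (σ : Equiv.Perm (Fin d)) : Prop :=
  ∀ i : Fin d, ((σ i : ℕ) < a ↔ (i : ℕ) < a)

/-- the relations `z - z·σ`, `σ ∈ 𝔖_a × 𝔖_b`, defining the coinvariants
`T_{a,b} ≅ 𝐒^a(k^{m|n}) ⊗ 𝐒^b(k^{m|n})` -/
def youngRel (a : ℕ) : Submodule (SAlg k m n d) (W k m n d) :=
  Submodule.span _ {x | ∃ (z : W k m n d) (σ : Equiv.Perm (Fin d)),
    InYoung d a σ ∧ x = z - act k σ z}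

/-- the coinvariant space `T_{a,b}` of `(k^{m|n})^{⊗d}` for the signed action of the
Young subgroup `𝔖_a × 𝔖_b ⊆ 𝔖_d` -/
def YoungQ (a : ℕ) : Type := W k m n d ⧸ youngRel k m n d a

instance (a : ℕ) : AddCommGroup (YoungQ k m n d a) :=
  inferInstanceAs (AddCommGroup (W k m n d ⧸ youngRel k m n d a))

instance (a : ℕ) : Module (SAlg k m n d) (YoungQ k m n d a) :=
  inferInstanceAs (Module (SAlg k m n d) (W k m n d ⧸ youngRel k m n d a))

/-- `T_{a,b}` as an object of the module category of `S(m|n,d)` -/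
noncomputable abbrev YoungQcat (a : ℕ) : SMod k m n d := ModuleCat.of _ (YoungQ k m n d a)

section Abstract

/-- A reproducing family of ring elements makes the module injective. -/
theorem injective_of_reproducing {K A T : Type} [Field K] [Ring A] [Algebra K A]
    [AddCommGroup T] [Module A T] [Module K T] [IsScalarTower K A T] [FiniteDimensional K T]
    (ξ : T →ₗ[K] K) (s : (T →ₗ[K] K) →ₗ[K] A)
    (h1 : ∀ h t, ξ (s h • t) = h t)
    (h2 : ∀ (h h' : T →ₗ[K] K) (c : A), (∀ t, h' t = h (c • t)) → s h * c = s h') :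
    Module.Injective A T := by
  constructor
  intro X Y _ _ _ _ f hf g
  letI : Module K X := Module.compHom X (algebraMap K A)
  letI : Module K Y := Module.compHom Y (algebraMap K A)
  haveI : IsScalarTower K A X := IsScalarTower.of_algebraMap_smul fun _ _ => rfl
  haveI : IsScalarTower K A Y := IsScalarTower.of_algebraMap_smul fun _ _ => rfl
  let fK : X →ₗ[K] Y := f.restrictScalars K
  obtain ⟨l, hl⟩ := fK.exists_leftInverse_of_injective (LinearMap.ker_eq_bot.2 hf)
  let η : Y →ₗ[K] K := (ξ ∘ₗ g.restrictScalars K) ∘ₗ l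
  have hη : ∀ x, η (f x) = ξ (g x) := fun x => by
    have : l (fK x) = x := congrArg (fun u => u x) hl
    change ξ (g (l (fK x))) = _
    rw [this]
  let G : Y →ₗ[K] Module.Dual K (Module.Dual K T) :=
    LinearMap.mk₂ K (fun y h => η (s h • y))
      (fun y y' h => by simp [smul_add])
      (fun c y h => by rw [smul_comm (s h) c y, map_smul η])
      (fun y h h' => by simp [add_smul])
      (fun c y h => by rw [map_smul s, smul_assoc, map_smul η])
  let e := Module.evalEquiv K T
  have key : ∀ y (h : Module.Dual K T), h (e.symm (G y)) = η (s h • y) := fun y h => by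
    have : e (e.symm (G y)) h = G y h := by rw [LinearEquiv.apply_symm_apply]
    exact this
  have sep : ∀ t t' : T, (∀ h : Module.Dual K T, h t = h t') → t = t' := fun t t' H =>
    e.injective (LinearMap.ext fun h => H h)
  refine ⟨{ toFun := fun y => e.symm (G y), map_add' := by simp, map_smul' := ?_ }, ?_⟩
  · intro c y
    apply sep
    intro h
    let h' : T →ₗ[K] K := h ∘ₗ (Algebra.lsmul K K T c)
    have e1 : h (c • e.symm (G y)) = h' (e.symm (G y)) := rfl
    simp only [RingHom.id_apply]
    rw [e1, key, key, ← mul_smul, h2 h h' c (fun _ => rfl)]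
  · intro x
    apply sep
    intro h
    change h (e.symm (G (f x))) = _
    rw [key, ← map_smul, hη, map_smul, h1]

/-- homs into a module with a reproducing family vanish when the family kills the source -/
theorem hom_zero_of_reproducing {K A T X : Type} [Field K] [Ring A] [Algebra K A]
    [AddCommGroup T] [Module A T] [Module K T] [IsScalarTower K A T] [FiniteDimensional K T]
    [AddCommGroup X] [Module A X]
    (ξ : T →ₗ[K] K) (s : (T →ₗ[K] K) →ₗ[K] A)
    (h1 : ∀ h t, ξ (s h • t) = h t)
    (h0 : ∀ h (x : X), s h • x = 0) (φ : X →ₗ[A] T) : φ = 0 := by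
  ext x
  apply (Module.evalEquiv K T).injective
  apply LinearMap.ext
  intro h
  change h (φ x) = h 0
  rw [← h1, ← map_smul, h0]
  simp

end Abstract

section Signs

theorem perm_inv_self {d : ℕ} (σ : Equiv.Perm (Fin d)) (x : Fin d) : σ⁻¹ (σ x) = x :=
  σ.symm_apply_apply x

theorem perm_self_inv {d : ℕ} (σ : Equiv.Perm (Fin d)) (x : Fin d) : σ (σ⁻¹ x) = x :=
  σ.apply_symm_apply x

/-- pairwise sign -/
def psgn {d : ℕ} (σ : Equiv.Perm (Fin d)) (q q' : Fin d) : ℤ :=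
  if (q < q' ↔ σ q < σ q') then 1 else -1

theorem prod_pairs_perm {d : ℕ} (σ : Equiv.Perm (Fin d)) (F : Fin d → Fin d → ℤ)
    (hF : ∀ x y, F x y = F y x) :
    ∏ q ∈ (univ ×ˢ univ).filter (fun q : Fin d × Fin d => q.1 < q.2), F (σ q.1) (σ q.2) =
    ∏ q ∈ (univ ×ˢ univ).filter (fun q : Fin d × Fin d => q.1 < q.2), F q.1 q.2 := by
  refine Finset.prod_nbij'
    (fun q => if σ q.1 < σ q.2 then (σ q.1, σ q.2) else (σ q.2, σ q.1))
    (fun q => if σ⁻¹ q.1 < σ⁻¹ q.2 then (σ⁻¹ q.1, σ⁻¹ q.2) else (σ⁻¹ q.2, σ⁻¹ q.1)) ?_ ?_ ?_ ?_ ?_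
  · rintro ⟨x, y⟩ h
    simp only [mem_filter, mem_product, mem_univ, true_and] at h ⊢
    have : σ x ≠ σ y := fun e => h.ne (σ.injective e)
    split_ifs with h1
    · exact h1
    · exact lt_of_le_of_ne (not_lt.1 h1) this.symm
  · rintro ⟨x, y⟩ h
    simp only [mem_filter, mem_product, mem_univ, true_and] at h ⊢
    have : σ⁻¹ x ≠ σ⁻¹ y := fun e => h.ne (σ⁻¹.injective e)
    split_ifs with h1
    · exact h1
    · exact lt_of_le_of_ne (not_lt.1 h1) this.symm
  · rintro ⟨x, y⟩ h
    simp only [mem_filter, mem_product, mem_univ, true_and] at h ⊢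
    by_cases h1 : σ x < σ y
    · simp [h1, h]
    · simp [h1, h.le]
  · rintro ⟨x, y⟩ h
    simp only [mem_filter, mem_product, mem_univ, true_and] at h ⊢
    by_cases h1 : σ⁻¹ x < σ⁻¹ y
    · rw [if_pos h1]
      simp only [perm_self_inv]
      rw [if_pos h]
    · rw [if_neg h1]
      simp only [perm_self_inv]
      rw [if_neg h.le.not_gt]
  · rintro ⟨x, y⟩ h
    by_cases h1 : σ x < σ y
    · simp [h1]
    · simp [h1, hF (σ x)]

/-- the pair factor -/
def pfac {d : ℕ} (σ : Equiv.Perm (Fin d)) (γ : Fin d → Bool) (q q' : Fin d) : ℤ :=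
  if γ q = true ∧ γ q' = true then psgn σ q q' else 1

theorem pfac_symm {d : ℕ} (σ : Equiv.Perm (Fin d)) (γ : Fin d → Bool) (q q' : Fin d) :
    pfac σ γ q q' = pfac σ γ q' q := by
  rcases eq_or_ne q q' with rfl | hne
  · rfl
  have hs : σ q ≠ σ q' := fun e => hne (σ.injective e)
  unfold pfac psgn
  have : (q < q' ↔ σ q < σ q') ↔ (q' < q ↔ σ q' < σ q) := by
    have h1 : q' < q ↔ ¬ q < q' := by
      rw [not_lt]; exact ⟨le_of_lt, fun h => lt_of_le_of_ne h hne.symm⟩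
    have h2 : σ q' < σ q ↔ ¬ σ q < σ q' := by
      rw [not_lt]; exact ⟨le_of_lt, fun h => lt_of_le_of_ne h hs.symm⟩
    rw [h1, h2]; tauto
  simp only [this, and_comm]

theorem sign_eq_prod {d : ℕ} (σ : Equiv.Perm (Fin d)) (γ : Fin d → Bool) :
    (-1 : ℤ) ^ signExp σ (fun i => γ (σ⁻¹ i)) =
    ∏ q ∈ (univ ×ˢ univ).filter (fun q : Fin d × Fin d => q.1 < q.2), pfac σ γ q.1 q.2 := by
  unfold signExp
  rw [← Finset.prod_const, Finset.prod_filter, Finset.prod_filter]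
  apply Finset.prod_congr rfl
  rintro ⟨x, y⟩ -
  simp only [perm_inv_self]
  unfold pfac psgn
  by_cases h : x < y
  · have hs : σ x ≠ σ y := fun e => h.ne (σ.injective e)
    by_cases h2 : σ x < σ y
    · simp [h, h2, h2.le, not_lt.2 h2.le]
    · have h3 : σ y < σ x := lt_of_le_of_ne (not_lt.1 h2) hs.symm
      simp [h, h2, h3]
  · simp [h]

theorem sign_mul {d : ℕ} (σ τ : Equiv.Perm (Fin d)) (γ : Fin d → Bool) :
    (-1 : ℤ) ^ signExp (τ * σ) (fun i => γ ((τ * σ)⁻¹ i)) =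
    (-1 : ℤ) ^ signExp σ (fun i => γ (σ⁻¹ i)) *
    (-1 : ℤ) ^ signExp τ (fun i => γ (σ⁻¹ (τ⁻¹ i))) := by
  rw [sign_eq_prod, sign_eq_prod, sign_eq_prod τ (fun i => γ (σ⁻¹ i)),
    ← prod_pairs_perm σ _ (pfac_symm τ _), ← Finset.prod_mul_distrib]
  apply Finset.prod_congr rfl
  rintro ⟨x, y⟩ -
  simp only [pfac, psgn, perm_inv_self, Equiv.Perm.mul_apply]
  by_cases hg : γ x = true ∧ γ y = true
  · simp only [hg, and_self, if_true]
    by_cases h1 : x < y <;> by_cases h2 : σ x < σ y <;> by_cases h3 : τ (σ x) < τ (σ y) <;>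
      simp [h1, h2, h3, hg]
  · simp [hg]

theorem signK_mul (k : Type) [Field k] {d : ℕ} (σ τ : Equiv.Perm (Fin d)) (γ : Fin d → Bool) :
    (-1 : k) ^ signExp (τ * σ) (fun i => γ ((τ * σ)⁻¹ i)) =
    (-1 : k) ^ signExp σ (fun i => γ (σ⁻¹ i)) *
    (-1 : k) ^ signExp τ (fun i => γ (σ⁻¹ (τ⁻¹ i))) := by
  have := congrArg (Int.cast : ℤ → k) (sign_mul σ τ γ)
  push_cast at this
  exact this

end Signs

section Act

variable {k m n d}

theorem act_apply (σ : Equiv.Perm (Fin d)) (x : W k m n d) (g : Fin d → BIdx m n) :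
    act k σ x g = (-1 : k) ^ signExp σ (fun i => bpar (g (σ⁻¹ i))) * x (g ∘ ⇑σ⁻¹) := rfl

theorem act_act (σ τ : Equiv.Perm (Fin d)) (x : W k m n d) :
    act k σ (act k τ x) = act k (τ * σ) x := by
  funext g
  rw [act_apply, act_apply, act_apply, signK_mul k σ τ (fun i => bpar (g i)), ← mul_assoc]
  have : g ∘ ⇑(τ * σ)⁻¹ = (g ∘ ⇑σ⁻¹) ∘ ⇑τ⁻¹ := by
    funext i; simp [mul_inv_rev, Equiv.Perm.mul_apply]
  rw [this]
  rfl

theorem signExp_even {σ : Equiv.Perm (Fin d)} {ε : Fin d → Bool} (h : ∀ i, ε i = false) :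
    signExp σ ε = 0 := by
  unfold signExp
  simp [h]

theorem act_apply_even (σ : Equiv.Perm (Fin d)) (x : W k m n d) (g : Fin d → BIdx m n)
    (hg : ∀ i, bpar (g i) = false) : act k σ x g = x (g ∘ ⇑σ⁻¹) := by
  rw [act_apply, signExp_even (fun i => hg _)]
  simp

theorem act_one (x : W k m n d) : act k 1 x = x := by
  funext g
  rw [act_apply]
  have : signExp (1 : Equiv.Perm (Fin d)) (fun i => bpar (g ((1 : Equiv.Perm (Fin d))⁻¹ i))) = 0 := by
    unfold signExp
    rw [Finset.card_eq_zero, Finset.filter_eq_empty_iff]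
    rintro ⟨x, y⟩ -
    simp only [Equiv.Perm.one_apply]
    rintro ⟨h1, h2, -⟩
    exact absurd h1 h2.le.not_gt
  rw [this]
  simp

theorem smul_act (c : SAlg k m n d) (σ : Equiv.Perm (Fin d)) (x : W k m n d) :
    c • act k σ x = act k σ (c • x) := by
  have := (Subalgebra.mem_centralizer_iff k).1 c.2 (act k σ) ⟨σ, rfl⟩
  exact (congrArg (fun u : Module.End k (W k m n d) => u x) this).symm

theorem act_tpow_even (σ : Equiv.Perm (Fin d)) (v : BIdx m n → k) (hv : IsEven k v) :
    act k σ (tpow k m n d v) = tpow k m n d v := by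
  funext g
  have e : tpow k m n d v (g ∘ ⇑σ⁻¹) = tpow k m n d v g :=
    Equiv.prod_comp σ⁻¹ (fun i => v (g i))
  by_cases hg : ∀ i, bpar (g i) = false
  · rw [act_apply_even σ _ g hg, e]
  · push Not at hg
    obtain ⟨i, hi⟩ := hg
    have h0 : tpow k m n d v g = 0 := by
      apply Finset.prod_eq_zero (Finset.mem_univ i)
      rcases hgi : g i with j | j
      · simp [hgi, bpar] at hi
      · exact hv j
    rw [act_apply, e, h0, mul_zero]

theorem act_tpow_odd (σ : Equiv.Perm (Fin d)) (v : BIdx m n → k) (hv : IsOdd k v) :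
    act k σ (tpow k m n d v) = (-1 : k) ^ signExp σ (fun _ => true) • tpow k m n d v := by
  funext g
  have e : tpow k m n d v (g ∘ ⇑σ⁻¹) = tpow k m n d v g :=
    Equiv.prod_comp σ⁻¹ (fun i => v (g i))
  change _ = (-1 : k) ^ signExp σ (fun _ => true) * tpow k m n d v g
  rw [act_apply, e]
  by_cases hg : ∀ i, bpar (g i) = true
  · simp only [hg]
  · push Not at hg
    obtain ⟨i, hi⟩ := hg
    have h0 : tpow k m n d v g = 0 := by
      apply Finset.prod_eq_zero (Finset.mem_univ i)
      rcases hgi : g i with j | j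
      · exact hv j
      · simp [hgi, bpar] at hi
    rw [h0, mul_zero, mul_zero]

theorem signExp_swap (i j : Fin d) (hij : (j : ℕ) = i + 1) :
    signExp (Equiv.swap i j) (fun _ => true) = 1 := by
  unfold signExp
  rw [Finset.card_eq_one]
  refine ⟨(i, j), ?_⟩
  ext ⟨x, y⟩
  simp only [mem_filter, mem_product, mem_univ, true_and, and_true, mem_singleton, Prod.mk.injEq,
    Equiv.swap_apply_def, Fin.lt_def, Fin.ext_iff]
  split_ifs <;> omega

end Act

section Kernel

variable {k m n d}

noncomputable instance instKY (a : ℕ) : Module k (YoungQ k m n d a) :=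
  Module.compHom _ (algebraMap k (SAlg k m n d))

instance instKYT (a : ℕ) : IsScalarTower k (SAlg k m n d) (YoungQ k m n d a) :=
  IsScalarTower.of_algebraMap_smul fun _ _ => rfl

/-- the projection to the coinvariants, over `k` -/
def yMk (a : ℕ) : W k m n d →ₗ[k] YoungQ k m n d a where
  toFun z := Submodule.Quotient.mk z
  map_add' _ _ := rfl
  map_smul' _ _ := rfl

theorem yMk_surj (a : ℕ) : Function.Surjective (yMk (k := k) (m := m) (n := n) (d := d) a) :=
  Submodule.Quotient.mk_surjective _

theorem yMk_smul (a : ℕ) (c : SAlg k m n d) (z : W k m n d) : yMk a (c • z) = c • yMk a z := rfl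

instance instFW : FiniteDimensional k (W k m n d) :=
  inferInstanceAs (FiniteDimensional k ((Fin d → BIdx m n) → k))

instance instFY (a : ℕ) : FiniteDimensional k (YoungQ k m n d a) :=
  Module.Finite.of_surjective (yMk a) (yMk_surj a)

theorem yMk_act (a : ℕ) (σ : Equiv.Perm (Fin d)) (hσ : InYoung d a σ) (z : W k m n d) :
    yMk a (act k σ z) = yMk a z := by
  symm
  exact (Submodule.Quotient.eq _).2 (Submodule.subset_span ⟨z, σ, hσ, rfl⟩)

variable (a : ℕ) (i1 i2 : Fin m)

/-- the base word -/
def f0 (n d : ℕ) : Fin d → BIdx m n := fun i => if (i : ℕ) < a then Sum.inl i1 else Sum.inl i2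

theorem f0_par (i : Fin d) : bpar (f0 a i1 i2 n d i) = false := by
  unfold f0; split_ifs <;> rfl

variable {i1 i2}

theorem f0_fix (h12 : i1 ≠ i2) {ρ : Equiv.Perm (Fin d)}
    (h : f0 a i1 i2 n d ∘ ρ = f0 a i1 i2 n d) : InYoung d a ρ := by
  intro i
  have := congrFun h i
  simp only [Function.comp, f0] at this
  by_cases h1 : ((ρ i : Fin d) : ℕ) < a <;> by_cases h2 : (i : ℕ) < a <;>
    simp [h1, h2, h12, h12.symm] at this ⊢

theorem f0_young {ρ : Equiv.Perm (Fin d)} (h : InYoung d a ρ) :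
    f0 a i1 i2 n d ∘ ρ = f0 a i1 i2 n d := by
  funext i
  simp only [Function.comp, f0, h i]

theorem young_inv {ρ : Equiv.Perm (Fin d)} (h : InYoung d a ρ) : InYoung d a ρ⁻¹ := by
  intro i
  have := h (ρ⁻¹ i)
  rw [perm_self_inv] at this
  exact this.symm

variable (i1 i2)

open Classical in
/-- the value of the kernel operator -/
noncomputable def sVal (h : YoungQ k m n d a →ₗ[k] k) (z : W k m n d) (f : Fin d → BIdx m n) : k :=
  if hf : ∃ τ : Equiv.Perm (Fin d), f = f0 a i1 i2 n d ∘ τ then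
    h (yMk a (act k hf.choose⁻¹ z)) else 0

/-- the kernel operator attached to a functional -/
noncomputable def sLin (h : YoungQ k m n d a →ₗ[k] k) : W k m n d →ₗ[k] W k m n d where
  toFun z := fun f => sVal a i1 i2 h z f
  map_add' x y := by
    funext f
    change _ = sVal a i1 i2 h x f + sVal a i1 i2 h y f
    unfold sVal
    split_ifs <;> simp
  map_smul' c x := by
    funext f
    change _ = c * sVal a i1 i2 h x f
    unfold sVal
    split_ifs <;> simp

variable {i1 i2}

theorem sLin_orb (h12 : i1 ≠ i2) (h : YoungQ k m n d a →ₗ[k] k) (z : W k m n d)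
    (τ : Equiv.Perm (Fin d)) :
    sLin a i1 i2 h z (f0 a i1 i2 n d ∘ τ) = h (yMk a (act k τ⁻¹ z)) := by
  have hf : ∃ τ' : Equiv.Perm (Fin d), f0 a i1 i2 n d ∘ τ = f0 a i1 i2 n d ∘ τ' := ⟨τ, rfl⟩
  have e : sLin a i1 i2 h z (f0 a i1 i2 n d ∘ τ) = h (yMk a (act k hf.choose⁻¹ z)) := dif_pos hf
  rw [e]
  have hs := hf.choose_spec
  set τ' := hf.choose
  have hY : InYoung d a (τ' * τ⁻¹) := by
    apply f0_fix a (n := n) h12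
    funext i
    have := congrFun hs (τ⁻¹ i)
    simp only [Function.comp, perm_self_inv] at this
    simp only [Function.comp, Equiv.Perm.mul_apply]
    exact this.symm
  have : τ⁻¹ = τ'⁻¹ * (τ' * τ⁻¹) := by group
  rw [this, ← act_act, yMk_act a _ hY]

theorem sLin_not (h : YoungQ k m n d a →ₗ[k] k) (z : W k m n d) (f : Fin d → BIdx m n)
    (hf : ¬ ∃ τ : Equiv.Perm (Fin d), f = f0 a i1 i2 n d ∘ τ) :
    sLin a i1 i2 h z f = 0 := dif_neg hf

theorem sLin_comm (h12 : i1 ≠ i2) (h : YoungQ k m n d a →ₗ[k] k) (z : W k m n d)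
    (σ : Equiv.Perm (Fin d)) :
    act k σ (sLin a i1 i2 h z) = sLin a i1 i2 h (act k σ z) := by
  funext f
  by_cases hf : ∃ τ : Equiv.Perm (Fin d), f = f0 a i1 i2 n d ∘ τ
  · obtain ⟨τ, rfl⟩ := hf
    rw [sLin_orb a h12, act_apply_even σ _ (f0 a i1 i2 n d ∘ ⇑τ) (fun i => f0_par a i1 i2 _)]
    have : (f0 a i1 i2 n d ∘ τ) ∘ ⇑σ⁻¹ = f0 a i1 i2 n d ∘ ⇑(τ * σ⁻¹) := rfl
    rw [this, sLin_orb a h12, act_act]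
    simp
  · rw [sLin_not a h _ f hf, act_apply, sLin_not a h _ _, mul_zero]
    rintro ⟨τ, hτ⟩
    apply hf
    refine ⟨τ * σ, ?_⟩
    funext i
    have := congrFun hτ (σ i)
    simpa using this

/-- the reproducing family -/
noncomputable def sFam (h12 : i1 ≠ i2) : (YoungQ k m n d a →ₗ[k] k) →ₗ[k] SAlg k m n d where
  toFun h := ⟨sLin a i1 i2 h, by
    rw [Schur, Subalgebra.mem_centralizer_iff]
    rintro _ ⟨σ, rfl⟩
    ext1 z
    exact sLin_comm a h12 h z σ⟩
  map_add' h h' := by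
    apply Subtype.ext
    apply LinearMap.ext
    intro z
    funext f
    change sVal a i1 i2 (h + h') z f = sVal a i1 i2 h z f + sVal a i1 i2 h' z f
    unfold sVal
    split_ifs <;> simp
  map_smul' c h := by
    apply Subtype.ext
    apply LinearMap.ext
    intro z
    funext f
    change sVal a i1 i2 (c • h) z f = c * sVal a i1 i2 h z f
    unfold sVal
    split_ifs <;> simp

theorem sFam_smul (h12 : i1 ≠ i2) (h : YoungQ k m n d a →ₗ[k] k) (z : W k m n d) :
    sFam a h12 h • z = sLin a i1 i2 h z := rfl

theorem youngRel_f0 (x : W k m n d) (hx : x ∈ youngRel k m n d a) :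
    ∀ c : SAlg k m n d, (c • x) (f0 a i1 i2 n d) = 0 := by
  induction hx using Submodule.span_induction with
  | mem x hx =>
    obtain ⟨z, σ, hσ, rfl⟩ := hx
    intro c
    rw [smul_sub, smul_act]
    change (c • z) _ - act k σ (c • z) _ = 0
    rw [act_apply_even _ _ _ (f0_par a i1 i2), f0_young a (young_inv a hσ), sub_self]
  | zero => intro c; rw [smul_zero]; rfl
  | add x y _ _ hx hy =>
    intro c
    rw [smul_add]
    change (c • x) _ + (c • y) _ = 0
    rw [hx, hy, add_zero]
  | smul b x _ hx => intro c; rw [← mul_smul]; exact hx _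

variable (i1 i2) in
/-- the coefficient functional -/
noncomputable def xi : YoungQ k m n d a →ₗ[k] k where
  toFun := Quotient.lift (s := Submodule.quotientRel (youngRel k m n d a))
    (fun z => z (f0 a i1 i2 n d)) (by
      intro x y hxy
      have := (Submodule.quotientRel_def _).1 hxy
      have := youngRel_f0 a (i1 := i1) (i2 := i2) _ this 1
      rw [one_smul] at this
      exact sub_eq_zero.1 this)
  map_add' x y := by
    obtain ⟨x, rfl⟩ := yMk_surj a x
    obtain ⟨y, rfl⟩ := yMk_surj a y
    rfl
  map_smul' c x := by
    obtain ⟨x, rfl⟩ := yMk_surj a x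
    rfl

theorem xi_mk (z : W k m n d) : xi a i1 i2 (yMk a z) = z (f0 a i1 i2 n d) := rfl

theorem rep1 (h12 : i1 ≠ i2) (h : YoungQ k m n d a →ₗ[k] k) (t : YoungQ k m n d a) :
    xi a i1 i2 (sFam a h12 h • t) = h t := by
  obtain ⟨z, rfl⟩ := yMk_surj a t
  rw [← yMk_smul, xi_mk, sFam_smul]
  have := sLin_orb a h12 h z 1
  rw [inv_one, act_one] at this
  exact this

theorem rep2 (h12 : i1 ≠ i2) (h h' : YoungQ k m n d a →ₗ[k] k) (c : SAlg k m n d)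
    (hh : ∀ t, h' t = h (c • t)) : sFam a h12 h * c = sFam a h12 h' := by
  apply Subtype.ext
  apply LinearMap.ext
  intro z
  change sLin a i1 i2 h (c • z) = sLin a i1 i2 h' z
  funext f
  by_cases hf : ∃ τ : Equiv.Perm (Fin d), f = f0 a i1 i2 n d ∘ τ
  · obtain ⟨τ, rfl⟩ := hf
    rw [sLin_orb a h12, sLin_orb a h12, hh, ← yMk_smul, smul_act]
  · rw [sLin_not a h _ f hf, sLin_not a h' _ f hf]

/-- elements killed by the reproducing family -/
theorem killed_span {X : Type} [AddCommGroup X] [Module (SAlg k m n d) X] (h12 : i1 ≠ i2)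
    (S : Set X) (hS : ∀ x ∈ S, ∀ h, sFam (k := k) (n := n) (d := d) a h12 h • x = 0) (x : X)
    (hx : x ∈ Submodule.span (SAlg k m n d) S) : ∀ h, sFam (k := k) (n := n) (d := d) a h12 h • x = 0 := by
  induction hx using Submodule.span_induction with
  | mem x hx => exact hS x hx
  | zero => intro h; rw [smul_zero]
  | add x y _ _ hx hy => intro h; rw [smul_add, hx, hy, add_zero]
  | smul c x _ hx =>
    intro h
    rw [← mul_smul, rep2 a h12 h (h ∘ₗ Algebra.lsmul k k _ c) c (fun _ => rfl), hx]

theorem killed_odd (h12 : i1 ≠ i2) (h2 : (2 : k) ≠ 0) (hd : 3 ≤ d)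
    (v : BIdx m n → k) (hv : IsOdd k v) (h : YoungQ k m n d a →ₗ[k] k) :
    sFam a h12 h • tpow k m n d v = 0 := by
  have hz : h (yMk a (tpow k m n d v)) = 0 := by
    obtain ⟨i, j, hij, hY⟩ : ∃ i j : Fin d, (j : ℕ) = i + 1 ∧ ((i : ℕ) < a ↔ (j : ℕ) < a) := by
      by_cases h : 2 ≤ a
      · exact ⟨⟨0, by omega⟩, ⟨1, by omega⟩, rfl, by simp; omega⟩
      · exact ⟨⟨1, by omega⟩, ⟨2, by omega⟩, rfl, by simp; omega⟩
    have hsw : InYoung d a (Equiv.swap i j) := by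
      intro x
      rw [Equiv.swap_apply_def]
      split_ifs with h1 h3
      · rw [h1]; exact hY.symm
      · rw [h3]; exact hY
      · rfl
    have e := congrArg h (yMk_act a _ hsw (tpow k m n d v))
    rw [act_tpow_odd _ v hv, signExp_swap i j hij, map_smul, map_smul] at e
    simp only [pow_one, smul_eq_mul, neg_mul, one_mul] at e
    have : 2 * h (yMk a (tpow k m n d v)) = 0 := by linear_combination -e
    exact (mul_eq_zero.1 this).resolve_left h2
  rw [sFam_smul]
  funext f
  by_cases hf : ∃ τ : Equiv.Perm (Fin d), f = f0 a i1 i2 n d ∘ τ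
  · obtain ⟨τ, rfl⟩ := hf
    rw [sLin_orb a h12, act_tpow_odd _ v hv, map_smul, map_smul, hz, smul_zero]
    rfl
  · rw [sLin_not a h _ f hf]
    rfl

theorem orbit_iff (f : Fin d → BIdx m n) (h12 : i1 ≠ i2) (had : a ≤ d) :
    (∃ τ : Equiv.Perm (Fin d), f = f0 a i1 i2 n d ∘ τ) ↔
    ∃ A ∈ Finset.powersetCard a (univ : Finset (Fin d)),
      (fun i => if i ∈ A then Sum.inl i1 else Sum.inl i2) = f := by
  have hc : Fintype.card {i : Fin d // (i : ℕ) < a} = a := by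
    rw [Fintype.card_subtype]
    rw [Fin.card_filter_val_lt]; exact min_eq_right had
  constructor
  · rintro ⟨τ, rfl⟩
    refine ⟨univ.filter (fun i => (τ i : ℕ) < a), ?_, ?_⟩
    · rw [Finset.mem_powersetCard]
      refine ⟨Finset.subset_univ _, ?_⟩
      rw [← Fintype.card_subtype]
      refine Eq.trans ?_ hc
      exact Fintype.card_congr (τ.subtypeEquiv (fun _ => Iff.rfl))
    · funext i
      simp [f0]
  · rintro ⟨A, hA, rfl⟩
    rw [Finset.mem_powersetCard] at hA
    have hcA : Fintype.card {i : Fin d // i ∈ A} = Fintype.card {i : Fin d // (i : ℕ) < a} := by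
      rw [hc, Fintype.card_coe, hA.2]
    let e := Fintype.equivOfCardEq hcA
    refine ⟨e.extendSubtype, ?_⟩
    funext i
    by_cases hi : i ∈ A
    · have := e.extendSubtype_mem i hi
      simp [f0, hi, this]
    · have := e.extendSubtype_not_mem i hi
      simp only [Function.comp, f0, hi, if_false, this]

open Classical in
theorem killed_even (h12 : i1 ≠ i2) (had : a ≤ d) (hch : ((d.choose a : ℕ) : k) = 0)
    (v : BIdx m n → k) (hv : IsEven k v) (h : YoungQ k m n d a →ₗ[k] k) :
    sFam a h12 h • symMk k m n d (tpow k m n d v) = 0 := by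
  change symMk k m n d (sLin a i1 i2 h (tpow k m n d v)) = 0
  set wd : Finset (Fin d) → (Fin d → BIdx m n) :=
    fun A i => if i ∈ A then Sum.inl i1 else Sum.inl i2 with hwd
  have wd_inj : Function.Injective wd := by
    intro A B hAB
    ext i
    have := congrFun hAB i
    by_cases hA : i ∈ A <;> by_cases hB : i ∈ B <;> simp [hwd, hA, hB, h12, h12.symm] at this ⊢
  set P := Finset.powersetCard a (univ : Finset (Fin d))
  let δ : (Fin d → BIdx m n) → W k m n d := fun f g => if g = f then 1 else 0
  set c : k := h (yMk a (tpow k m n d v)) with hc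
  let q : W k m n d →+ SymQ k m n d :=
    { toFun := symMk k m n d, map_zero' := rfl, map_add' := fun _ _ => rfl }
  let cδ : (Fin d → BIdx m n) → W k m n d := fun f => c • δ f
  have happ : ∀ f g, cδ f g = if g = f then c else 0 := fun f g => by
    change c * (if g = f then 1 else 0) = _
    split_ifs <;> simp
  have e1 : sLin a i1 i2 h (tpow k m n d v) = ∑ A ∈ P, cδ (wd A) := by
    funext g
    have : (∑ A ∈ P, cδ (wd A)) g = ∑ A ∈ P, cδ (wd A) g :=
      Finset.sum_apply (M := fun _ => k) g P (fun A => cδ (wd A))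
    rw [this]
    simp only [happ]
    by_cases hg : ∃ τ : Equiv.Perm (Fin d), g = f0 a i1 i2 n d ∘ τ
    · obtain ⟨A, hA, hAg⟩ := (orbit_iff a g h12 had).1 hg
      obtain ⟨τ, rfl⟩ := hg
      rw [sLin_orb a h12, act_tpow_even _ v hv, ← hc, Finset.sum_eq_single A]
      · rw [if_pos hAg.symm]
      · intro B _ hBA
        rw [if_neg]
        intro hB
        exact hBA (wd_inj (hB.symm.trans hAg.symm))
      · exact fun hh => absurd hA hh
    · rw [sLin_not a h _ g hg, Finset.sum_eq_zero]
      intro A hA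
      rw [if_neg]
      rintro rfl
      exact hg ((orbit_iff a _ h12 had).2 ⟨A, hA, rfl⟩)
  have e2 : ∀ A ∈ P, q (cδ (wd A)) = q (cδ (f0 a i1 i2 n d)) := by
    intro A hA
    obtain ⟨τ, hτ⟩ := (orbit_iff a (wd A) h12 had).2 ⟨A, hA, rfl⟩
    have : cδ (wd A) = act k τ (cδ (f0 a i1 i2 n d)) := by
      funext g
      rw [act_apply, happ, happ]
      have hiff : g ∘ ⇑τ⁻¹ = f0 a i1 i2 n d ↔ g = wd A := by
        rw [hτ]
        constructor
        · intro hh; rw [← hh]; funext i; simp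
        · rintro rfl; funext i; simp
      by_cases hg : g = wd A
      · rw [if_pos hg, if_pos (hiff.2 hg), signExp_even, pow_zero, one_mul]
        intro i
        rw [hg, hτ]
        exact f0_par a i1 i2 _
      · rw [if_neg hg, if_neg (fun hh => hg (hiff.1 hh)), mul_zero]
    rw [this]
    symm
    exact (Submodule.Quotient.eq _).2 (Submodule.subset_span ⟨_, τ, rfl⟩)
  change q _ = 0
  rw [e1, map_sum, Finset.sum_congr rfl e2, Finset.sum_const, Finset.card_powersetCard,
    Finset.card_univ, Fintype.card_fin, ← map_nsmul]
  have : d.choose a • cδ (f0 a i1 i2 n d) = 0 := by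
    rw [← Nat.cast_smul_eq_nsmul k, hch, zero_smul]
  rw [this, map_zero]

theorem young_injective (h12 : i1 ≠ i2) : Module.Injective (SAlg k m n d) (YoungQ k m n d a) :=
  injective_of_reproducing (xi a i1 i2) (sFam a h12) (rep1 a h12) (rep2 a h12)

theorem ext_subsingleton (h12 : i1 ≠ i2) (X : Type) [AddCommGroup X] [Module (SAlg k m n d) X]
    (h0 : ∀ h (x : X), sFam (k := k) (n := n) (d := d) a h12 h • x = 0) (s : ℕ) :
    Subsingleton (Ext (ModuleCat.of (SAlg k m n d) X) (YoungQcat k m n d a) s) := by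
  haveI := young_injective (k := k) (n := n) (d := d) a h12
  haveI : Injective (YoungQcat k m n d a) :=
    Module.injective_object_of_injective_module _ _
  refine subsingleton_of_forall_eq 0 ?_
  rcases s with _ | s
  · intro x
    obtain ⟨f, rfl⟩ := Ext.homEquiv₀.symm.surjective x
    have : f = 0 := by
      apply ModuleCat.hom_ext
      exact hom_zero_of_reproducing (xi a i1 i2) (sFam a h12) (rep1 a h12) h0 f.hom
    rw [this]
    exact Ext.mk₀_zero _ _
  · intro x
    exact Ext.eq_zero_of_injective x

end Kernel

theorem statement12 (k : Type) [Field k] (p : ℕ) [Fact p.Prime] [CharP k p] [ExpChar k p]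
    [PerfectRing k p] (hp2 : 2 < p) (r : ℕ) (hr : 1 ≤ r) (m n : ℕ)
    (hm : p ^ r ≤ m) (hn : p ^ r ≤ n) (a b : ℕ) (ha : 1 ≤ a) (hb : 1 ≤ b)
    (hab : a + b = p ^ r) (s : ℕ) :
    Subsingleton (Ext (M0cat k m n (p ^ r)) (YoungQcat k m n (p ^ r) a) s) ∧
    Subsingleton (Ext (M1cat k m n (p ^ r)) (YoungQcat k m n (p ^ r) a) s) := by
  have hp : p.Prime := Fact.out
  have hd : 3 ≤ p ^ r := hp2.trans_le (Nat.le_self_pow (by omega) p)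
  have had : a ≤ p ^ r := by omega
  have h12 : (⟨0, by omega⟩ : Fin m) ≠ ⟨1, by omega⟩ := by simp
  have h2 : (2 : k) ≠ 0 := by
    intro h
    have : ((2 : ℕ) : k) = 0 := by exact_mod_cast h
    rw [CharP.cast_eq_zero_iff k p] at this
    exact absurd (Nat.le_of_dvd (by norm_num) this) (by omega)
  have hch : (((p ^ r).choose a : ℕ) : k) = 0 := by
    rw [CharP.cast_eq_zero_iff k p]
    exact hp.dvd_choose_pow (by omega) (by omega)
  constructor
  · apply ext_subsingleton a h12
    rintro h ⟨x, hx⟩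
    apply Subtype.ext
    refine killed_span a h12 _ ?_ x hx h
    rintro _ ⟨v, hv, rfl⟩ h
    exact killed_even a h12 had hch v hv h
  · apply ext_subsingleton a h12
    rintro h ⟨x, hx⟩
    apply Subtype.ext
    refine killed_span a h12 _ ?_ x hx h
    rintro _ ⟨v, hv, rfl⟩ h
    exact killed_odd a h12 h2 hd v hv h

end Stmt12
end

section
/- Let k be a field of odd characteristic p, let A := k[Y]/(Y^{2p} − Y²), and let k be the A-module on which Y acts as 0 (via the augmentation Y ↦ 0). Then for every n ≥ 0 the space Ext^n_A(k,k) is one-dimensional over k, and the Yoneda algebra Ext^•_A(k,k) is isomorphic as a graded k-algebra to the polynomial ring k[u] on one generator u of cohomological degree 1. -/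
open CategoryTheory Polynomial

set_option synthInstance.maxHeartbeats 1000000
set_option maxHeartbeats 4000000

namespace Stmt16

variable (k : Type) [Field k] (p : ℕ) [Fact p.Prime]

/-- the algebra `A = k[Y]/(Y^{2p} - Y²)`, the underlying algebra of the restricted enveloping
superalgebra of the Lie superalgebra `⟨x, y⟩` with `[y,y] = 2x`, `x^{[p]} = x` -/
def A : Type := Polynomial k ⧸ Ideal.span {(X : Polynomial k) ^ (2 * p) - X ^ 2}

noncomputable instance : CommRing (A k p) :=
  inferInstanceAs (CommRing (Polynomial k ⧸ Ideal.span {(X : Polynomial k) ^ (2 * p) - X ^ 2}))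

noncomputable instance : Algebra k (A k p) :=
  inferInstanceAs (Algebra k (Polynomial k ⧸ Ideal.span {(X : Polynomial k) ^ (2 * p) - X ^ 2}))

/-- the augmentation map `A → k`, `Y ↦ 0` -/
noncomputable def aug : A k p →+* k :=
  Ideal.Quotient.lift _ ((aeval (0 : k)).toRingHom : Polynomial k →+* k) (by
    intro f hf
    rw [Ideal.mem_span_singleton] at hf
    obtain ⟨c, rfl⟩ := hf
    simp [Nat.Prime.ne_zero (Fact.out (p := p.Prime))])

/-- the trivial `A`-module `k`, on which `Y` acts as `0` -/
def Ktriv : Type := k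

instance : AddCommGroup (Ktriv k) := inferInstanceAs (AddCommGroup k)

noncomputable instance : Module (A k p) (Ktriv k) :=
  Module.compHom k (aug k p)

/-- the trivial module `k` as an object of the category of `A`-modules -/
noncomputable abbrev Kcat : ModuleCat.{0} (A k p) := ModuleCat.of (A k p) (Ktriv k)

noncomputable instance : HasDerivedCategory.{1} (ModuleCat.{0} (A k p)) :=
  HasDerivedCategory.standard _

instance : HasExt.{1} (ModuleCat.{0} (A k p)) :=
  CategoryTheory.hasExt_of_hasDerivedCategory _

open Abelian in
lemma Ext_mk₀_add {X Y : ModuleCat.{0} (A k p)} (f g : X ⟶ Y) :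
    Ext.mk₀ (f + g) = Ext.mk₀ f + Ext.mk₀ g := by
  apply Ext.ext
  rw [Ext.add_hom, Ext.mk₀_hom, Ext.mk₀_hom, Ext.mk₀_hom, Functor.map_add]
  simp [ShiftedHom.mk₀, Preadditive.add_comp]

open Abelian in
/-- the `k`-vector space structure on the Ext-groups of `A`-modules, where `c • x` is the
Yoneda composite of `x` with `c • 𝟙` -/
noncomputable instance extModule (X Y : ModuleCat.{0} (A k p)) (N : ℕ) :
    Module k (Ext X Y N) where
  smul c x := (Ext.mk₀ (c • 𝟙 X)).comp x (zero_add N)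
  one_smul x := by
    show (Ext.mk₀ ((1 : k) • 𝟙 X)).comp x (zero_add N) = x
    rw [one_smul]
    exact Ext.mk₀_id_comp x
  mul_smul a b x := by
    show (Ext.mk₀ ((a * b) • 𝟙 X)).comp x (zero_add N) =
      (Ext.mk₀ (a • 𝟙 X)).comp ((Ext.mk₀ (b • 𝟙 X)).comp x (zero_add N)) (zero_add N)
    rw [Ext.mk₀_comp_mk₀_assoc (a • 𝟙 X) (b • 𝟙 X) x]
    congr 2
    simp [smul_smul, mul_comm a b]
  smul_zero a := Ext.comp_zero _ _ _ _ _
  smul_add a x y := Ext.comp_add _ _ _ _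
  add_smul a b x := by
    show (Ext.mk₀ ((a + b) • 𝟙 X)).comp x (zero_add N) =
      (Ext.mk₀ (a • 𝟙 X)).comp x (zero_add N) + (Ext.mk₀ (b • 𝟙 X)).comp x (zero_add N)
    rw [add_smul, Ext_mk₀_add, Ext.add_comp]
  zero_smul x := by
    show (Ext.mk₀ ((0 : k) • 𝟙 X)).comp x (zero_add N) = 0
    rw [zero_smul, Ext.mk₀_zero, Ext.zero_comp]

open Abelian in
/-- the `N`-th Yoneda power of a degree-one extension class -/
noncomputable def upow {X : ModuleCat.{0} (A k p)} (u : Ext X X 1) :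
    (N : ℕ) → Ext X X N
  | 0 => Ext.mk₀ (𝟙 X)
  | N + 1 => (upow u N).comp u rfl


/-! ### Auxiliary material for the proof -/

/-- the class of `Y` in `A` -/
noncomputable def Yel : A k p := Ideal.Quotient.mk _ (X : Polynomial k)

lemma Yel_pow : (Yel k p) ^ (2 * p) = (Yel k p) ^ 2 := by
  have h : Ideal.Quotient.mk (Ideal.span {(X : Polynomial k) ^ (2 * p) - X ^ 2})
      ((X : Polynomial k) ^ (2 * p) - X ^ 2) = 0 :=
    Ideal.Quotient.eq_zero_iff_mem.mpr (Ideal.subset_span rfl)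
  rw [map_sub, map_pow, map_pow, sub_eq_zero] at h
  exact h

/-- the quotient map `k[Y] → A` -/
noncomputable def mkA : Polynomial k →+* A k p := Ideal.Quotient.mk _

/-- the map `A → k[ε]`, `Y ↦ ε` -/
noncomputable def toDual : A k p →+* DualNumber k :=
  Ideal.Quotient.lift _ ((aeval (DualNumber.eps : DualNumber k)).toRingHom :
      Polynomial k →+* DualNumber k) (by
    intro f hf
    rw [Ideal.mem_span_singleton] at hf
    obtain ⟨c, rfl⟩ := hf
    have h2 : (DualNumber.eps : DualNumber k) ^ 2 = 0 := by
      rw [pow_two, DualNumber.eps_mul_eps]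
    have hp : (DualNumber.eps : DualNumber k) ^ (2 * p) = 0 := by
      rw [pow_mul, h2, zero_pow (Nat.Prime.ne_zero (Fact.out (p := p.Prime)))]
    simp [h2, hp])

lemma toDual_mk (f : Polynomial k) :
    toDual k p (mkA k p f) = aeval (DualNumber.eps : DualNumber k) f := rfl

lemma aug_mk (f : Polynomial k) :
    aug k p (mkA k p f) = aeval (0 : k) f := rfl

lemma mk_surj (r : A k p) : ∃ f : Polynomial k, r = mkA k p f := by
  obtain ⟨f, hf⟩ := Ideal.Quotient.mk_surjective r
  exact ⟨f, hf.symm⟩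

lemma aug_eq_fst (r : A k p) : aug k p r = TrivSqZeroExt.fst (toDual k p r) := by
  obtain ⟨f, rfl⟩ := mk_surj k p r
  rw [toDual_mk, aug_mk]
  have h := Polynomial.aeval_algHom_apply (TrivSqZeroExt.fstHom k k k)
    (DualNumber.eps : DualNumber k) f
  have h0 : TrivSqZeroExt.fstHom k k k (DualNumber.eps : DualNumber k) = 0 := rfl
  rw [h0] at h
  exact h

/-- the projective cover of the trivial module -/
def Bmod : Type := DualNumber k

noncomputable instance : AddCommGroup (Bmod k) := inferInstanceAs (AddCommGroup (DualNumber k))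

noncomputable instance : Module (A k p) (Bmod k) :=
  Module.compHom (DualNumber k) (toDual k p)

lemma Bsmul (r : A k p) (x : Bmod k) :
    r • x = (show Bmod k from (toDual k p r * (show DualNumber k from x) : DualNumber k)) := rfl

lemma Ksmul (r : A k p) (x : Ktriv k) :
    r • x = (show Ktriv k from (aug k p r * (show k from x) : k)) := rfl

/-- the inclusion of the socle -/
noncomputable def iota : Ktriv k →ₗ[A k p] Bmod k where
  toFun c := (TrivSqZeroExt.inr (show k from c) : DualNumber k)
  map_add' a b := TrivSqZeroExt.inr_add k (show k from a) (show k from b)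
  map_smul' r c := by
    have key (c : k) : (TrivSqZeroExt.inr (aug k p r * c) : DualNumber k) =
        toDual k p r * TrivSqZeroExt.inr c := by
      rw [aug_eq_fst]
      apply TrivSqZeroExt.ext
      · simp
      · simp [mul_comm]
    exact key c

/-- the projection onto the head -/
noncomputable def proj : Bmod k →ₗ[A k p] Ktriv k where
  toFun x := TrivSqZeroExt.fst (show DualNumber k from x)
  map_add' a b := rfl
  map_smul' r c := by
    change TrivSqZeroExt.fst (toDual k p r * (show DualNumber k from c)) =
      aug k p r * TrivSqZeroExt.fst (show DualNumber k from c)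
    rw [aug_eq_fst]
    exact TrivSqZeroExt.fst_mul (toDual k p r) _

/-- the surjection from `A` -/
noncomputable def surjB : A k p →ₗ[A k p] Bmod k :=
  LinearMap.toSpanSingleton (A k p) (Bmod k) (1 : DualNumber k)

/-- the idempotent -/
noncomputable def idem : A k p := 1 - (Yel k p) ^ (2 * p - 2)

lemma two_le_p : 2 ≤ p := (Fact.out (p := p.Prime)).two_le

lemma idem_mul : idem k p * Yel k p ^ 2 = 0 := by
  have := two_le_p p
  rw [idem, sub_mul, one_mul, ← pow_add, show 2 * p - 2 + 2 = 2 * p by omega, Yel_pow, sub_self]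

/-- the section, as a function on dual numbers -/
noncomputable def secFun : DualNumber k →+ A k p where
  toFun x := idem k p * (algebraMap k (A k p) x.fst + algebraMap k (A k p) x.snd * Yel k p)
  map_zero' := by simp
  map_add' a b := by
    simp only [TrivSqZeroExt.fst_add, TrivSqZeroExt.snd_add, map_add]
    ring

lemma secFun_apply (x : DualNumber k) : secFun k p x =
  idem k p * (algebraMap k (A k p) x.fst + algebraMap k (A k p) x.snd * Yel k p) := rfl

lemma secFun_toDual (r : A k p) : secFun k p (toDual k p r) = idem k p * r := by
  obtain ⟨f, rfl⟩ := mk_surj k p r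
  induction f using Polynomial.induction_on' with
  | add f g hf hg =>
    rw [map_add, map_add, map_add, hf, hg, mul_add]
  | monomial n a =>
    have e : mkA k p (monomial n a) = algebraMap k (A k p) a * Yel k p ^ n := by
      rw [← Polynomial.C_mul_X_pow_eq_monomial, map_mul, map_pow]
      rfl
    rw [toDual_mk, aeval_monomial, secFun_apply, e]
    have hfs : algebraMap k (DualNumber k) a = TrivSqZeroExt.inl a := rfl
    rw [hfs]
    match n with
    | 0 => simp
    | 1 => simp
    | n + 2 =>
      have h2 : (DualNumber.eps : DualNumber k) ^ 2 = 0 := by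
        rw [pow_two, DualNumber.eps_mul_eps]
      have h3 : idem k p * (algebraMap k (A k p) a * Yel k p ^ (n + 2)) = 0 := by
        rw [pow_add, show idem k p * (algebraMap k (A k p) a * (Yel k p ^ n * Yel k p ^ 2)) =
          (algebraMap k (A k p) a * Yel k p ^ n) * (idem k p * Yel k p ^ 2) by ring, idem_mul,
          mul_zero]
      rw [h3, pow_add, h2]
      simp

lemma toDual_algebraMap (c : k) : toDual k p (algebraMap k (A k p) c) = TrivSqZeroExt.inl c := by
  have : algebraMap k (A k p) c = mkA k p (C c) := rfl
  rw [this, toDual_mk, aeval_C]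
  rfl

lemma toDual_Yel : toDual k p (Yel k p) = DualNumber.eps := by
  have : Yel k p = mkA k p X := rfl
  rw [this, toDual_mk, aeval_X]

lemma toDual_surj (x : DualNumber k) : ∃ r : A k p, toDual k p r = x := by
  refine ⟨algebraMap k (A k p) x.fst + algebraMap k (A k p) x.snd * Yel k p, ?_⟩
  rw [map_add, map_mul, toDual_algebraMap, toDual_algebraMap, toDual_Yel]
  apply TrivSqZeroExt.ext <;> simp

lemma toDual_idem : toDual k p (idem k p) = 1 := by
  have := two_le_p p
  have h2 : (DualNumber.eps : DualNumber k) ^ 2 = 0 := by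
    rw [pow_two, DualNumber.eps_mul_eps]
  rw [idem, map_sub, map_one, map_pow, toDual_Yel,
    show 2 * p - 2 = 2 + (2 * p - 4) by omega, pow_add, h2, zero_mul, sub_zero]

/-- the section -/
noncomputable def sec : Bmod k →ₗ[A k p] A k p where
  toFun x := secFun k p x
  map_add' := (secFun k p).map_add
  map_smul' r x := by
    have key (x : DualNumber k) : secFun k p (toDual k p r * x) = r * secFun k p x := by
      obtain ⟨s, rfl⟩ := toDual_surj k p x
      rw [← map_mul, secFun_toDual, secFun_toDual]
      ring
    exact key x

lemma surjB_sec : surjB k p ∘ₗ sec k p = LinearMap.id := by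
  ext x
  obtain ⟨s, hs⟩ := toDual_surj k p x
  change toDual k p (secFun k p x) * (1 : DualNumber k) = x
  rw [← hs, secFun_toDual, map_mul, toDual_idem, one_mul, mul_one]

instance : Module.Projective (A k p) (Bmod k) :=
  Module.Projective.of_split (sec k p) (surjB k p) (surjB_sec k p)

/-- the short exact sequence `0 → k → B → k → 0` -/
noncomputable def ses : ShortComplex (ModuleCat.{0} (A k p)) :=
  ShortComplex.mk (X₁ := Kcat k p) (X₂ := ModuleCat.of (A k p) (Bmod k)) (X₃ := Kcat k p)
    (ModuleCat.ofHom (iota k p)) (ModuleCat.ofHom (proj k p)) (by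
      ext x
      exact TrivSqZeroExt.fst_inr k (show k from x))

lemma ses_exact : (ses k p).ShortExact := by
  apply ModuleCat.shortComplex_shortExact
  · intro (x : DualNumber k)
    constructor
    · intro (h : x.fst = 0)
      refine ⟨(show Ktriv k from x.snd), ?_⟩
      change (TrivSqZeroExt.inr x.snd : DualNumber k) = x
      apply TrivSqZeroExt.ext
      · simp [h]
      · simp
    · rintro ⟨c, rfl⟩
      exact TrivSqZeroExt.fst_inr k (show k from c)
  · intro a b h
    exact TrivSqZeroExt.inr_injective (R := k) (M := k) h
  · intro c
    exact ⟨(TrivSqZeroExt.inl (show k from c) : DualNumber k), rfl⟩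

instance : Projective (ses k p).X₂ :=
  (IsProjective.iff_projective (R := A k p) (Bmod k)).mp inferInstance

lemma iota_comp (g : ModuleCat.of (A k p) (Bmod k) ⟶ Kcat k p) :
    ModuleCat.ofHom (iota k p) ≫ g = 0 := by
  ext (c : k)
  change g.hom (iota k p c) = 0
  have : iota k p c = Yel k p • (show Bmod k from (TrivSqZeroExt.inl c : DualNumber k)) := by
    rw [Bsmul, toDual_Yel]
    change (TrivSqZeroExt.inr c : DualNumber k) = DualNumber.eps * TrivSqZeroExt.inl c
    apply TrivSqZeroExt.ext <;> simp
  rw [this, map_smul, Ksmul, aug_eq_fst, toDual_Yel]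
  exact zero_mul (M₀ := k) _

open Abelian in
/-- the generator -/
noncomputable def ugen : Ext (Kcat k p) (Kcat k p) 1 := (ses_exact k p).extClass

open Abelian in
lemma ugen_inj {N : ℕ} (x : Ext (Kcat k p) (Kcat k p) N)
    (hx : (ugen k p).comp x (add_comm 1 N) = 0) : x = 0 := by
  obtain ⟨y, rfl⟩ := Ext.contravariant_sequence_exact₁ (ses_exact k p) (Kcat k p) x
    (add_comm 1 N) hx
  match N with
  | 0 =>
    obtain ⟨g, rfl⟩ := (Ext.mk₀_bijective _ _).2 y
    rw [Ext.mk₀_comp_mk₀]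
    have : (ses k p).f ≫ g = 0 := iota_comp k p g
    rw [this, Ext.mk₀_zero]
    rfl
  | N + 1 =>
    rw [Ext.eq_zero_of_projective y, Ext.comp_zero]
    rfl

open Abelian in
lemma ugen_surj {N : ℕ} (x : Ext (Kcat k p) (Kcat k p) (N + 1)) :
    ∃ y : Ext (Kcat k p) (Kcat k p) N, (ugen k p).comp y (add_comm 1 N) = x :=
  Ext.contravariant_sequence_exact₃ (ses_exact k p) (Kcat k p) x
    (Ext.eq_zero_of_projective _) (add_comm 1 N)

open Abelian in
lemma smul_def' {X Y : ModuleCat.{0} (A k p)} {N : ℕ} (c : k) (x : Ext X Y N) :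
    c • x = (Ext.mk₀ (c • 𝟙 X)).comp x (zero_add N) := rfl

open Abelian in
lemma central {X Y : ModuleCat.{0} (A k p)} {N : ℕ} (c : k) (x : Ext X Y N) :
    (Ext.mk₀ (c • 𝟙 X)).comp x (zero_add N) = x.comp (Ext.mk₀ (c • 𝟙 Y)) (add_zero N) := by
  rw [Ext.mk₀_smul, Ext.mk₀_smul, Ext.smul_comp, Ext.comp_smul, Ext.mk₀_id_comp, Ext.comp_mk₀_id]

open Abelian in
lemma upow_succ' {X : ModuleCat.{0} (A k p)} (u : Ext X X 1) (N : ℕ) :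
    upow k p u (N + 1) = u.comp (upow k p u N) (add_comm 1 N) := by
  induction N with
  | zero =>
    change (Ext.mk₀ (𝟙 X)).comp u rfl = u.comp (Ext.mk₀ (𝟙 X)) _
    rw [Ext.mk₀_id_comp, Ext.comp_mk₀_id]
  | succ N ih =>
    change (upow k p u (N + 1)).comp u rfl = u.comp ((upow k p u N).comp u rfl) _
    rw [ih, Ext.comp_assoc]
    omega

open Abelian in
lemma smul_upow_succ (c : k) (N : ℕ) :
    c • upow k p (ugen k p) (N + 1) =
      (ugen k p).comp (c • upow k p (ugen k p) N) (add_comm 1 N) := by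
  rw [upow_succ', smul_def', smul_def', ← Ext.comp_assoc (a₁₂ := 1) _ _ _ (by omega) (by omega)
    (by omega), ← Ext.comp_assoc (a₁₂ := 1) _ _ _ (by omega) (by omega) (by omega), central]

lemma smul_hom_apply (c : k) (a : k) :
    (c • 𝟙 (Kcat k p) : Kcat k p ⟶ Kcat k p).hom (show Ktriv k from a) =
      (show Ktriv k from c * a) := by
  change algebraMap k (A k p) c • (show Ktriv k from a) = _
  rw [Ksmul, aug_eq_fst, toDual_algebraMap]
  rfl

open Abelian in
lemma bij (N : ℕ) : Function.Bijective (fun c : k => c • upow k p (ugen k p) N) := by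
  induction N with
  | zero =>
    have h : (fun c : k => c • upow k p (ugen k p) 0) =
        fun c : k => Ext.mk₀ (c • 𝟙 (Kcat k p)) := by
      funext c
      change (Ext.mk₀ (c • 𝟙 _)).comp (Ext.mk₀ (𝟙 (Kcat k p))) _ = _
      rw [Ext.comp_mk₀_id]
    rw [h]
    refine (Ext.mk₀_bijective (Kcat k p) (Kcat k p)).comp
      (f := fun c : k => c • 𝟙 (Kcat k p)) ⟨?_, ?_⟩
    · intro a b hab
      have h1 := smul_hom_apply k p a 1
      have h2 := smul_hom_apply k p b 1
      have hab' : (a • 𝟙 (Kcat k p) : Kcat k p ⟶ Kcat k p) = b • 𝟙 (Kcat k p) := hab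
      rw [hab', h2] at h1
      simpa using (show b * 1 = a * 1 from h1).symm
    · intro f
      refine ⟨(show k from f.hom (show Ktriv k from (1 : k))), ?_⟩
      ext (a : k)
      refine (smul_hom_apply k p _ a).trans ?_
      have h1 : (show Ktriv k from a) = algebraMap k (A k p) a • (show Ktriv k from (1 : k)) := by
        rw [Ksmul, aug_eq_fst, toDual_algebraMap]
        exact (mul_one a).symm
      have h2 (b : Ktriv k) : algebraMap k (A k p) a • b =
          (show Ktriv k from ((show k from b) * a : k)) := by
        rw [Ksmul, aug_eq_fst, toDual_algebraMap]
        exact mul_comm (G := k) a b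
      have h3 : f.hom (show Ktriv k from a) =
          algebraMap k (A k p) a • f.hom (show Ktriv k from (1 : k)) :=
        (congrArg f.hom h1).trans (map_smul f.hom _ _)
      exact (h3.trans (h2 _)).symm
  | succ N ih =>
    constructor
    · intro a b hab
      apply ih.1
      have hab' : a • upow k p (ugen k p) (N + 1) = b • upow k p (ugen k p) (N + 1) := hab
      rw [smul_upow_succ, smul_upow_succ] at hab'
      refine sub_eq_zero.mp (ugen_inj k p _ ?_)
      rw [sub_eq_add_neg, Ext.comp_add, Ext.comp_neg, hab', add_neg_cancel]
    · intro x
      obtain ⟨y, rfl⟩ := ugen_surj k p x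
      obtain ⟨c, rfl⟩ := ih.2 y
      exact ⟨c, smul_upow_succ k p c N⟩

open Abelian in
/-- Let `k` be a field of odd characteristic `p` and let
`A = k[Y]/(Y^{2p} - Y²)`, with `k` the `A`-module on which `Y` acts as `0`. Then each
`Ext^N_A(k,k)` is one-dimensional over `k`, and the Yoneda algebra `Ext•_A(k,k)` is
isomorphic, as a graded `k`-algebra, to the polynomial ring `k[u]` on one generator `u` of
cohomological degree `1`: there is a class `u ∈ Ext¹` such that for every `N` the map
`c ↦ c • u^N` is a bijection from `k` onto `Ext^N_A(k,k)`. -/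
theorem statement16 (k : Type) [Field k] (p : ℕ) [Fact p.Prime] [CharP k p] (hodd : Odd p) :
    (∀ N : ℕ, Module.finrank k (Ext (Kcat k p) (Kcat k p) N) = 1) ∧
    (∃ u : Ext (Kcat k p) (Kcat k p) 1,
      ∀ N : ℕ, Function.Bijective (fun c : k => c • upow k p u N)) := by
  refine ⟨fun N => ?_, ugen k p, bij k p⟩
  have e := (LinearEquiv.ofBijective
    (LinearMap.toSpanSingleton k (Ext (Kcat k p) (Kcat k p) N) (upow k p (ugen k p) N))
    (bij k p N)).finrank_eq
  rw [← e, Module.finrank_self]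

end Stmt16
end
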